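/- arXiv:1407.0574 — 2 statements merged into one kernel-verified Lean document; each statement's English description precedes it below -/
import Mathlib

section
/- Let ε ∈ {0,1}, n ∈ ℕ, and set ν = ε + 2n. For every complex number z with Re(z) > 1, the integral ∫_{-∞}^{∞} (i - u)^ν · (1+u²)^{-(z+ν)/2} du converges and equals i^ε · ( ∏_{j=0}^{n-1} (2 - z + ε + 2j) ) / ( ∏_{j=0}^{n-1} (z + ε + 2j) ) · √π · Γ((z+ε-1)/2) / Γ((z+ε)/2). (Here the hypothesis Re(z) > 1 guarantees that all factors z+ε+2j and the Gamma value Γ((z+ε)/2) are nonzero; the empty product is 1.) -/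
open MeasureTheory


lemma aux_gauss (t : ℝ) (ht : 0 < t) :
    ∫ u : ℝ, Real.exp (-((1 + u ^ 2) * t)) = Real.exp (-t) * (√Real.pi * t ^ (-(1/2) : ℝ)) := by
  have h : ∀ u : ℝ, Real.exp (-((1 + u ^ 2) * t)) = Real.exp (-t) * Real.exp (-t * u ^ 2) := by
    intro u
    rw [← Real.exp_add]
    congr 1
    ring
  simp_rw [h]
  rw [integral_const_mul, integral_gaussian, Real.sqrt_div Real.pi_pos.le,
    Real.rpow_neg ht.le, ← Real.sqrt_eq_rpow, div_eq_mul_inv]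

lemma aux_base (s : ℂ) (hs : 1 / 2 < s.re) :
    ∫ u : ℝ, ((1 + u ^ 2 : ℝ) : ℂ) ^ (-s) =
      (√Real.pi : ℂ) * Complex.Gamma (s - 1 / 2) / Complex.Gamma s := by
  have hs0 : 0 < s.re := by linarith
  have hG : Complex.Gamma s ≠ 0 := Complex.Gamma_ne_zero_of_re_pos hs0
  rw [eq_div_iff hG]
  let F : ℝ → ℝ → ℂ := fun t u => (t : ℂ) ^ (s - 1) * ((Real.exp (-((1 + u ^ 2) * t)) : ℝ) : ℂ)
  have hnorm : ∀ t : ℝ, 0 < t → ∀ u, ‖F t u‖ = t ^ (s.re - 1) * Real.exp (-((1 + u ^ 2) * t)) := by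
    intro t ht u
    simp only [F]
    rw [norm_mul, Complex.norm_cpow_eq_rpow_re_of_pos ht, Complex.norm_real, Real.norm_eq_abs,
      Real.abs_exp]
    simp
  have hFm : Measurable (Function.uncurry F) := by
    unfold F Function.uncurry
    fun_prop
  have hFi : Integrable (Function.uncurry F) ((volume.restrict (Set.Ioi 0)).prod volume) := by
    rw [integrable_prod_iff hFm.aestronglyMeasurable]
    constructor
    · filter_upwards [ae_restrict_mem measurableSet_Ioi] with t ht
      have h1 : Integrable (fun u : ℝ => Real.exp (-((1 + u ^ 2) * t))) := by
        refine ((integrable_exp_neg_mul_sq (b := t) ht).const_mul (Real.exp (-t))).congr ?_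
        filter_upwards with u
        rw [← Real.exp_add]
        congr 1
        ring
      exact (h1.ofReal (𝕜 := ℂ)).const_mul ((t : ℂ) ^ (s - 1))
    · have h1 : Integrable (fun x : ℝ => Real.exp (-x) * x ^ (s.re - 1 / 2 - 1))
          (volume.restrict (Set.Ioi 0)) := Real.GammaIntegral_convergent (by linarith)
      have h2 := h1.const_mul √Real.pi
      refine Integrable.congr h2 ?_
      filter_upwards [ae_restrict_mem measurableSet_Ioi] with t ht
      have ht' : 0 < t := ht
      simp only [Function.uncurry]
      simp_rw [hnorm t ht']
      rw [integral_const_mul, aux_gauss t ht',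
        show s.re - 1 / 2 - 1 = (s.re - 1) + (-(1/2) : ℝ) by ring, Real.rpow_add ht']
      ring
  have hswap := integral_integral_swap hFi
  have hL : ∀ t ∈ Set.Ioi (0:ℝ), ∫ u, F t u =
      √Real.pi * (((Real.exp (-t) : ℝ) : ℂ) * (t : ℂ) ^ (s - 1 / 2 - 1)) := by
    intro t ht
    have ht' : 0 < t := ht
    simp only [F]
    rw [integral_const_mul, integral_complex_ofReal, aux_gauss t ht',
        show s - 1 / 2 - 1 = (s - 1) + ((-(1/2) : ℝ) : ℂ) by push_cast; ring,
        Complex.cpow_add _ _ (by exact_mod_cast ht'.ne')]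
    push_cast [Complex.ofReal_cpow ht'.le]
    ring
  have hR : ∀ u : ℝ, ∫ t in Set.Ioi 0, F t u = ((1 + u ^ 2 : ℝ) : ℂ) ^ (-s) * Complex.Gamma s := by
    intro u
    have hp : 0 < 1 + u ^ 2 := by positivity
    have := Complex.integral_cpow_mul_exp_neg_mul_Ioi hs0 hp
    simp only [F]
    rw [Complex.cpow_neg, ← Complex.inv_cpow _ _ ?_, ← one_div, ← this]
    · push_cast
      rfl
    · rw [Complex.arg_ofReal_of_nonneg hp.le]
      exact Real.pi_pos.ne
  rw [setIntegral_congr_fun measurableSet_Ioi hL] at hswap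
  simp_rw [hR] at hswap
  rw [integral_mul_const, integral_const_mul] at hswap
  rw [← hswap, Complex.Gamma_eq_integral (by simp; linarith)]
  rfl

lemma aux_norm (ν : ℕ) (w : ℂ) (u : ℝ) :
    ‖(Complex.I - (u : ℂ)) ^ ν * ((1 + u ^ 2 : ℝ) : ℂ) ^ w‖ =
      (1 + u ^ 2) ^ ((ν : ℝ) / 2 + w.re) := by
  have hp : 0 < 1 + u ^ 2 := by positivity
  have h1 : ‖Complex.I - (u : ℂ)‖ = (1 + u ^ 2) ^ ((1:ℝ) / 2) := by
    rw [← Real.sqrt_eq_rpow, Complex.norm_def, Complex.normSq_apply]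
    congr 1
    simp
    ring
  rw [norm_mul, norm_pow, Complex.norm_cpow_eq_rpow_re_of_pos hp, h1, ← Real.rpow_natCast,
    ← Real.rpow_mul hp.le, ← Real.rpow_add hp]
  congr 1
  ring

lemma aux_int (ν : ℕ) (z : ℂ) (hz : 1 < z.re) :
    Integrable (fun u : ℝ => (Complex.I - (u : ℂ)) ^ ν *
      ((1 + u ^ 2 : ℝ) : ℂ) ^ (-(z + (ν : ℂ)) / 2)) := by
  have h := integrable_rpow_neg_one_add_norm_sq (E := ℝ) (μ := volume) (r := z.re) (by simpa using hz)
  refine h.mono' (Measurable.aestronglyMeasurable (by fun_prop)) ?_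
  filter_upwards with u
  rw [aux_norm]
  apply le_of_eq
  rw [Real.norm_eq_abs, sq_abs]
  congr 1
  simp
  ring

lemma aux_rec (ν : ℕ) (z : ℂ) (hz : 1 < z.re) :
    ∫ u : ℝ, (Complex.I - (u : ℂ)) ^ (ν + 2) *
        ((1 + u ^ 2 : ℝ) : ℂ) ^ (-(z + ((ν + 2 : ℕ) : ℂ)) / 2) =
    (2 - z + ν) / (z + ν) * ∫ u : ℝ, (Complex.I - (u : ℂ)) ^ ν *
        ((1 + u ^ 2 : ℝ) : ℂ) ^ (-(z + (ν : ℂ)) / 2) := by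
  have i1 := aux_int ν z hz
  have i2 := aux_int (ν + 2) z hz
  have hd : ∀ u : ℝ, HasDerivAt (fun u : ℝ => (Complex.I - (u : ℂ)) ^ (ν + 1) *
      ((1 + u ^ 2 : ℝ) : ℂ) ^ (-(z + (ν : ℂ)) / 2))
      ((z - ν - 2) / 2 * ((Complex.I - (u : ℂ)) ^ ν *
        ((1 + u ^ 2 : ℝ) : ℂ) ^ (-(z + (ν : ℂ)) / 2)) +
       (z + ν) / 2 * ((Complex.I - (u : ℂ)) ^ (ν + 2) *
        ((1 + u ^ 2 : ℝ) : ℂ) ^ (-(z + ((ν + 2 : ℕ) : ℂ)) / 2))) u := by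
    intro u
    have hp : 0 < 1 + u ^ 2 := by positivity
    have hpc : ((1 + u ^ 2 : ℝ) : ℂ) ≠ 0 := by exact_mod_cast hp.ne'
    have hu : HasDerivAt (fun u : ℝ => (u : ℂ)) 1 u := Complex.ofRealCLM.hasDerivAt
    have ha := (hu.const_sub Complex.I).pow (ν + 1)
    have hb : HasDerivAt (fun u : ℝ => ((1 + u ^ 2 : ℝ) : ℂ)) (2 * u) u := by
      have := ((hu.pow 2).const_add 1)
      push_cast
      simpa using this
    have hsl : ((1 + u ^ 2 : ℝ) : ℂ) ∈ Complex.slitPlane := Complex.ofReal_mem_slitPlane.2 hp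
    have hc := (Complex.hasStrictDerivAt_cpow_const (c := -(z + (ν : ℂ)) / 2) hsl).hasDerivAt.comp u hb
    refine (ha.mul hc).congr_deriv ?_
    symm
    simp only [Pi.pow_apply, Function.comp]
    have e1 : ((1 + u ^ 2 : ℝ) : ℂ) ^ (-(z + (ν : ℂ)) / 2) =
        ((1 + u ^ 2 : ℝ) : ℂ) ^ (-(z + (ν : ℂ)) / 2 - 1) * (1 + (u : ℂ) ^ 2) := by
      rw [Complex.cpow_sub _ _ hpc, Complex.cpow_one]
      push_cast at hpc ⊢
      field_simp
    have e2 : -(z + ((ν + 2 : ℕ) : ℂ)) / 2 = -(z + (ν : ℂ)) / 2 - 1 := by push_cast; ring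
    rw [e2, e1]
    generalize ((1 + u ^ 2 : ℝ) : ℂ) ^ (-(z + (ν : ℂ)) / 2 - 1) = W
    have hI : (1 + (u : ℂ) ^ 2) = (Complex.I - u) * (-Complex.I - u) := by
      linear_combination Complex.I_sq
    rw [hI]
    simp only [Nat.add_sub_cancel]
    push_cast
    rw [pow_add _ ν 2, pow_succ _ ν]
    ring
  have hlim : ∀ l : Filter ℝ, Filter.Tendsto (fun u : ℝ => u ^ 2) l Filter.atTop →
      Filter.Tendsto (fun u : ℝ => (Complex.I - (u : ℂ)) ^ (ν + 1) *
      ((1 + u ^ 2 : ℝ) : ℂ) ^ (-(z + (ν : ℂ)) / 2)) l (nhds 0) := by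
    intro l hl
    rw [tendsto_zero_iff_norm_tendsto_zero]
    simp_rw [aux_norm]
    have h := (tendsto_rpow_neg_atTop (y := (z.re - 1) / 2) (by linarith)).comp
      (Filter.tendsto_atTop_add_const_left l 1 hl)
    refine h.congr fun u => ?_
    simp only [Function.comp]
    congr 1
    simp
    ring
  have hI := integral_of_hasDerivAt_of_tendsto hd ((i1.const_mul _).add (i2.const_mul _))
    (hlim _ (by simpa [Function.comp_def] using (Filter.tendsto_pow_atTop (α := ℝ) two_ne_zero).comp Filter.tendsto_neg_atBot_atTop)) (hlim _ (Filter.tendsto_pow_atTop two_ne_zero))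
  rw [integral_add (i1.const_mul _) (i2.const_mul _), integral_const_mul, integral_const_mul] at hI
  have hne : z + ν ≠ 0 := by
    intro h
    have := congrArg Complex.re h
    simp at this
    have : (0:ℝ) ≤ ν := by positivity
    linarith
  rw [div_mul_eq_mul_div, eq_div_iff hne]
  linear_combination 2 * hI

lemma aux_odd (z : ℂ) (hz : 1 < z.re) :
    ∫ u : ℝ, (Complex.I - (u : ℂ)) ^ 1 *
        ((1 + u ^ 2 : ℝ) : ℂ) ^ (-(z + ((1 : ℕ) : ℂ)) / 2) =
    Complex.I * ∫ u : ℝ, ((1 + u ^ 2 : ℝ) : ℂ) ^ (-((z + 1) / 2)) := by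
  have i1 := aux_int 1 z hz
  have h := integral_neg_eq_self (fun u : ℝ => (Complex.I - (u : ℂ)) ^ 1 *
        ((1 + u ^ 2 : ℝ) : ℂ) ^ (-(z + ((1 : ℕ) : ℂ)) / 2)) volume
  have h2 := integral_add i1 i1.comp_neg
  rw [h] at h2
  have h3 : ∀ u : ℝ, (Complex.I - (u : ℂ)) ^ 1 *
        ((1 + u ^ 2 : ℝ) : ℂ) ^ (-(z + ((1 : ℕ) : ℂ)) / 2) + (Complex.I - ((-u : ℝ) : ℂ)) ^ 1 *
        ((1 + (-u) ^ 2 : ℝ) : ℂ) ^ (-(z + ((1 : ℕ) : ℂ)) / 2) =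
      2 * Complex.I * ((1 + u ^ 2 : ℝ) : ℂ) ^ (-((z + 1) / 2)) := by
    intro u
    rw [neg_sq, Nat.cast_one, neg_div]
    push_cast
    ring
  simp_rw [h3] at h2
  rw [integral_const_mul] at h2
  linear_combination (-1/2) * h2

/-- The closed formula for the standard intertwining operator on the K-type of weight
`ν = ε + 2n`: for `Re z > 1`,
`∫_ℝ (i-u)^ν (1+u²)^{-(z+ν)/2} du
  = i^ε · (∏_{j<n} (2-z+ε+2j)) / (∏_{j<n} (z+ε+2j)) · √π · Γ((z+ε-1)/2)/Γ((z+ε)/2)`. -/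
theorem stmt_2 (ε : ℕ) (hε : ε ≤ 1) (n : ℕ) (z : ℂ) (hz : 1 < z.re) :
    Integrable (fun u : ℝ => (Complex.I - (u : ℂ)) ^ (ε + 2 * n) *
      ((1 + u ^ 2 : ℝ) : ℂ) ^ (-(z + ((ε + 2 * n : ℕ) : ℂ)) / 2)) ∧
    ∫ u : ℝ, (Complex.I - (u : ℂ)) ^ (ε + 2 * n) *
        ((1 + u ^ 2 : ℝ) : ℂ) ^ (-(z + ((ε + 2 * n : ℕ) : ℂ)) / 2) =
      Complex.I ^ ε *
        ((∏ j ∈ Finset.range n, (2 - z + (ε : ℂ) + 2 * (j : ℂ))) /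
          (∏ j ∈ Finset.range n, (z + (ε : ℂ) + 2 * (j : ℂ)))) *
        (Real.sqrt Real.pi : ℂ) * Complex.Gamma ((z + (ε : ℂ) - 1) / 2) /
        Complex.Gamma ((z + (ε : ℂ)) / 2) := by
  refine ⟨aux_int (ε + 2 * n) z hz, ?_⟩
  induction n with
  | zero =>
    interval_cases ε
    · have h := aux_base (z / 2) (by simp; linarith)
      simp only [mul_zero, add_zero, pow_zero, one_mul, Nat.cast_zero, Finset.range_zero,
        Finset.prod_empty, div_one, neg_div]
      rw [h, show (z - 1) / 2 = z / 2 - 1 / 2 by ring]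
    · have h := aux_base ((z + 1) / 2) (by simp; linarith)
      have h' := aux_odd z hz
      simp only [mul_zero, add_zero, Finset.range_zero, Finset.prod_empty, div_one, mul_one]
      rw [h', h, Nat.cast_one, show (z + 1 - 1) / 2 = (z + 1) / 2 - 1 / 2 by ring]
      ring
  | succ n ih =>
    have h := aux_rec (ε + 2 * n) z hz
    rw [show ε + 2 * (n + 1) = ε + 2 * n + 2 by ring, h, ih, Finset.prod_range_succ,
      Finset.prod_range_succ, mul_div_mul_comm]
    push_cast
    rw [← add_assoc, ← add_assoc]
    ring
end

section
/- Let A = ℤ[x₁₁, x₁₂, x₂₁, x₂₂], let D = x₁₁x₂₂ - x₁₂x₂₁, and let R be the localization of A away from D. Let β : R → R[t₁, t₁⁻¹, t₂, t₂⁻¹, u] be the ℤ-algebra homomorphism induced by the substitution x₁₁ ↦ t₁x₁₁ + u x₂₁, x₁₂ ↦ t₁x₁₂ + u x₂₂, x₂₁ ↦ t₂x₂₁, x₂₂ ↦ t₂x₂₂. If p, q are integers with p ≤ q, then the ℤ-module M = { f ∈ R : β(f) = t₁^p t₂^q f } is free of rank q - p + 1, with basis the elements D^p · x₂₁^i ·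 x₂₂^{q-p-i} for 0 ≤ i ≤ q - p. -/
open MvPolynomial

noncomputable section

/-- `A = ℤ[x₁₁,x₁₂,x₂₁,x₂₂]`, with the variable `(i,j)` standing for `x_{i+1,j+1}`. -/
abbrev A : Type := MvPolynomial (Fin 2 × Fin 2) ℤ

/-- The coordinate `x_{i+1,j+1}`. -/
def Xv (i j : Fin 2) : A := X (i, j)

/-- The determinant `D = x₁₁x₂₂ - x₁₂x₂₁`. -/
def Dpoly : A := Xv 0 0 * Xv 1 1 - Xv 0 1 * Xv 1 0

/-- `R = A[1/D]`, the affine algebra of `GL₂/ℤ`. -/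
abbrev R : Type := Localization.Away Dpoly

/-- `S = R[t₁,t₁⁻¹,t₂,t₂⁻¹,u]`, realized as `R[t₁,t₂,u]` localized away from `t₁t₂`;
here `t₁ = X 0`, `t₂ = X 1`, `u = X 2`. -/
abbrev S : Type := Localization.Away ((X 0 * X 1 : MvPolynomial (Fin 3) R))

/-- The image of the coordinate `x_{i+1,j+1}` in `S`. -/
def xS (i j : Fin 2) : S := algebraMap R S (algebraMap A R (Xv i j))

/-- The element `t₁` of `S`. -/
def t1 : S := algebraMap (MvPolynomial (Fin 3) R) S (X 0)

/-- The element `t₂` of `S`. -/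
def t2 : S := algebraMap (MvPolynomial (Fin 3) R) S (X 1)

/-- The element `u` of `S`. -/
def uS : S := algebraMap (MvPolynomial (Fin 3) R) S (X 2)

/-- The substitution `X ↦ bX` with `b = [[t₁,u],[0,t₂]]` on the level of coordinates:
`x₁₁ ↦ t₁x₁₁ + u x₂₁`, `x₁₂ ↦ t₁x₁₂ + u x₂₂`, `x₂₁ ↦ t₂x₂₁`, `x₂₂ ↦ t₂x₂₂`. -/
def substVal (v : Fin 2 × Fin 2) : S :=
  if v = (0, 0) then t1 * xS 0 0 + uS * xS 1 0
  else if v = (0, 1) then t1 * xS 0 1 + uS * xS 1 1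
  else if v = (1, 0) then t2 * xS 1 0
  else t2 * xS 1 1


/-- generic substitution -/
def gsub {B : Type*} [CommRing B] (s t u : B) (y : Fin 2 × Fin 2 → B) (v : Fin 2 × Fin 2) : B :=
  if v = (0, 0) then s * y (0, 0) + u * y (1, 0)
  else if v = (0, 1) then s * y (0, 1) + u * y (1, 1)
  else if v = (1, 0) then t * y (1, 0)
  else t * y (1, 1)

lemma gsub_map {B C : Type*} [CommRing B] [CommRing C] [Algebra ℤ B] [Algebra ℤ C] (φ : B →+* C) (s t u : B)
    (y : Fin 2 × Fin 2 → B) (a : A) :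
    φ (aeval (gsub s t u y) a) = aeval (gsub (φ s) (φ t) (φ u) (fun v => φ (y v))) a := by
  have := MvPolynomial.map_aeval (gsub s t u y) φ a
  rw [this, aeval_def, ← MvPolynomial.coe_eval₂Hom]
  have h1 : φ.comp (algebraMap ℤ B) = algebraMap ℤ C := RingHom.ext_int _ _
  have h2 : (fun v => φ (gsub s t u y v)) = gsub (φ s) (φ t) (φ u) (fun v => φ (y v)) := by
    funext v
    simp only [gsub]
    split_ifs <;> simp
  rw [h1, h2]

lemma Dpoly_ne : Dpoly ≠ 0 := by
  intro h
  have := congrArg (MvPolynomial.eval (fun v : Fin 2 × Fin 2 => if v.1 = v.2 then (1 : ℤ) else 0)) h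
  simp [Dpoly, Xv] at this

instance : IsDomain R :=
  IsLocalization.isDomain_localization (powers_le_nonZeroDivisors_of_noZeroDivisors Dpoly_ne)

lemma injAR : Function.Injective (algebraMap A R) :=
  IsLocalization.injective R (powers_le_nonZeroDivisors_of_noZeroDivisors Dpoly_ne)

lemma injPS : Function.Injective (algebraMap (MvPolynomial (Fin 3) R) S) :=
  IsLocalization.injective S (M := Submonoid.powers (X 0 * X 1 : MvPolynomial (Fin 3) R))
    (powers_le_nonZeroDivisors_of_noZeroDivisors
    (mul_ne_zero (X_ne_zero _) (X_ne_zero _)))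

lemma algRS (r : R) : algebraMap R S r = algebraMap (MvPolynomial (Fin 3) R) S (C r) := by
  rw [IsScalarTower.algebraMap_apply R (MvPolynomial (Fin 3) R) S]; rfl

lemma key1 (a : A) (k m : ℕ)
    (h : aeval substVal a = t1 ^ k * t2 ^ m * algebraMap R S (algebraMap A R a))
    {B : Type*} [CommRing B] [Algebra ℤ B] (s t u : B) (y : Fin 2 × Fin 2 → B) :
    aeval (gsub s t u y) a = s ^ k * t ^ m * aeval y a := by
  have h1 : aeval (gsub (X 0 : MvPolynomial (Fin 3) A) (X 1) (X 2) (fun v => C (X v))) a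
      = X 0 ^ k * X 1 ^ m * C a := by
    let ψ : MvPolynomial (Fin 3) A →+* S :=
      (algebraMap (MvPolynomial (Fin 3) R) S).comp (MvPolynomial.map (algebraMap A R))
    have hψ : Function.Injective ψ := injPS.comp (map_injective _ injAR)
    apply hψ
    rw [gsub_map]
    have : (gsub (ψ (X 0)) (ψ (X 1)) (ψ (X 2)) fun v => ψ (C (X v))) = substVal := by
      funext v
      simp [gsub, substVal, ψ, t1, t2, uS, xS, algRS, Xv]
    rw [this, h]
    simp [ψ, t1, t2, algRS]
  have h2 := congrArg (MvPolynomial.eval₂Hom ((aeval y : A →ₐ[ℤ] B) : A →+* B) ![s, t, u]) h1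
  rw [gsub_map] at h2
  simpa using h2

lemma coeff_scale {σ : Type*} [Fintype σ] (v : σ → ℤ) (h : MvPolynomial σ ℤ) (d : σ →₀ ℕ) :
    coeff d (aeval (fun i => C (v i) * X i : σ → MvPolynomial σ ℤ) h) =
      (∏ i, v i ^ d i) * coeff d h := by
  classical
  induction h using MvPolynomial.induction_on' with
  | monomial e c =>
    have : aeval (fun i => C (v i) * X i : σ → MvPolynomial σ ℤ) (monomial e c) =
        C (∏ i, v i ^ e i) * monomial e c := by
      rw [aeval_monomial, monomial_eq, Finsupp.prod_fintype _ _ (by simp),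
        Finsupp.prod_fintype _ _ (by simp)]
      simp only [mul_pow, Finset.prod_mul_distrib, map_prod, map_pow]
      simp
      ring
    rw [this, coeff_C_mul, coeff_monomial]
    split_ifs with hh
    · subst hh; rfl
    · simp
  | add p q hp hq => simp only [map_add, coeff_add, hp, hq]; ring

lemma key2 (a : A) (k n : ℕ)
    (H : ∀ (s t u : A) (y : Fin 2 × Fin 2 → A),
      aeval (gsub s t u y) a = s ^ k * t ^ (n + k) * aeval y a) :
    ∃ h : A, a = Dpoly ^ k * h ∧
      h ∈ Submodule.span ℤ (Set.range fun i : Fin (n + 1) => 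
        (Xv 1 0 ^ (i : ℕ) * Xv 1 1 ^ (n - (i : ℕ)) : A)) := by
  let y1 : Fin 2 × Fin 2 → A := fun v => if v = (0,0) then 1 else if v = (0,1) then 0 else X v
  let y2 : Fin 2 × Fin 2 → A := fun v => if v = (0,0) then 0 else if v = (0,1) then 1 else X v
  let y0 : Fin 2 × Fin 2 → A := fun v => if v = (0,0) then 0 else if v = (0,1) then 0 else X v
  let y3 : Fin 2 × Fin 2 → A := fun v => C (if v.1 = 0 then 0 else 2) * X v
  set c : A := aeval y1 a with hc
  have e1 : (X (1,1) : A) ^ k * a = Dpoly ^ k * c := by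
    have h1 := H (X (1,1)) 1 (- X (0,1)) X
    have h2 := H Dpoly 1 0 y1
    have : gsub (X (1,1)) 1 (- X (0,1)) X = gsub Dpoly 1 0 y1 := by
      funext ⟨i, j⟩
      fin_cases i <;> fin_cases j <;> simp [gsub, y1, Dpoly, Xv] <;> ring
    rw [this, h2] at h1
    rw [one_pow, mul_one, mul_one, aeval_X_left_apply] at h1
    exact h1.symm
  have comp : ∀ y z : Fin 2 × Fin 2 → A, ∀ b : A,
      aeval z (aeval y b : A) = aeval (fun v => (aeval z (y v) : A)) b := by
    intro y z b
    rw [← AlgHom.comp_apply, MvPolynomial.comp_aeval]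
  have c2 : (aeval y2 c : A) = c := by
    rw [hc, comp]; congr 2; funext ⟨i, j⟩
    fin_cases i <;> fin_cases j <;> simp [y1, y2]
  have c0 : (aeval y0 c : A) = c := by
    rw [hc, comp]; congr 2; funext ⟨i, j⟩
    fin_cases i <;> fin_cases j <;> simp [y1, y0]
  have hp : Prime (X (1,1) : A) := MvPolynomial.X_prime
  have dv : (X (1,1) : A) ^ k ∣ c := by
    have h1 := congrArg (aeval y2 : A →ₐ[ℤ] A) e1
    rw [map_mul, map_mul, c2] at h1
    have h3 : (X (1,1) : A) ^ k ∣ (-X (1,0)) ^ k * c := by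
      refine ⟨aeval y2 a, ?_⟩
      simpa [y2, Dpoly, Xv] using h1.symm
    refine hp.pow_dvd_of_dvd_mul_left k ?_ h3
    intro hd
    have hd := hp.dvd_of_dvd_pow hd
    rw [dvd_neg, MvPolynomial.X_dvd_X] at hd
    simp at hd
  obtain ⟨h, hh⟩ := dv
  have hX : (X (1,1) : A) ^ k ≠ 0 := pow_ne_zero _ hp.ne_zero
  have ha : a = Dpoly ^ k * h := by
    apply mul_left_cancel₀ hX
    rw [e1, hh]; ring
  refine ⟨h, ha, ?_⟩
  have h0 : (aeval y0 h : A) = h := by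
    apply mul_left_cancel₀ hX
    rw [← hh, ← c0, hh, map_mul, map_pow]
    simp [y0]
  have ht : (aeval (gsub 1 2 0 X) h : A) = 2 ^ n * h := by
    have h1 := H 1 2 0 X
    rw [ha, map_mul] at h1
    have hD : (aeval (gsub 1 2 0 X) Dpoly : A) = 2 * Dpoly := by
      simp [Dpoly, Xv, gsub]; ring
    have : (2 * Dpoly) ^ k ≠ 0 := pow_ne_zero _ (mul_ne_zero two_ne_zero Dpoly_ne)
    apply mul_left_cancel₀ this
    rw [map_pow, hD] at h1
    rw [h1, aeval_X_left_apply]; ring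
  have h3 : (aeval y3 h : A) = 2 ^ n * h := by
    rw [← ht]
    conv_rhs => rw [← h0, comp]
    congr 2; funext ⟨i, j⟩
    fin_cases i <;> fin_cases j <;> simp [y0, y3, gsub]
  have hs : ∀ d ∈ h.support, d (0,0) = 0 ∧ d (0,1) = 0 ∧ d (1,0) + d (1,1) = n := by
    intro d hd
    have h4 := congrArg (coeff d) h3
    rw [coeff_scale, show (2 ^ n : A) = C (2 ^ n) by simp, coeff_C_mul] at h4
    have h5 := mul_right_cancel₀ (mem_support_iff.1 hd) h4
    rw [Fintype.prod_prod_type] at h5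
    simp [Fin.prod_univ_two] at h5
    have h00 : d (0,0) = 0 := by
      by_contra hne
      rw [zero_pow hne] at h5
      simp at h5
      exact absurd h5.symm (pow_ne_zero _ two_ne_zero)
    have h01 : d (0,1) = 0 := by
      by_contra hne
      rw [zero_pow hne] at h5
      simp at h5
      exact absurd h5.symm (pow_ne_zero _ two_ne_zero)
    refine ⟨h00, h01, ?_⟩
    rw [h00, h01] at h5
    simp [← pow_add] at h5
    exact h5
  rw [h.as_sum]
  refine Submodule.sum_mem _ fun d hd => ?_
  obtain ⟨a1, a2, a3⟩ := hs d hd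
  have : monomial d (coeff d h) = coeff d h •
      (Xv 1 0 ^ (d (1,0)) * Xv 1 1 ^ (n - d (1,0)) : A) := by
    rw [monomial_eq, Finsupp.prod_fintype _ _ (by simp), Fintype.prod_prod_type]
    simp only [Fin.prod_univ_two, a1, a2, Xv, ← a3, smul_eq_C_mul]
    simp
  rw [this]
  exact Submodule.smul_mem _ _ (Submodule.subset_span ⟨⟨d (1,0), by omega⟩, rfl⟩)

lemma linind (n : ℕ) : LinearIndependent ℤ (fun i : Fin (n + 1) => 
        (Xv 1 0 ^ (i : ℕ) * Xv 1 1 ^ (n - (i : ℕ)) : A)) := by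
  let g : Fin (n+1) → (Fin 2 × Fin 2 →₀ ℕ) := fun i =>
    Finsupp.single (1,0) (i : ℕ) + Finsupp.single (1,1) (n - (i : ℕ))
  have hg : Function.Injective g := by
    intro i j hij
    have := DFunLike.congr_fun hij (1,0)
    simp [g] at this
    exact Fin.ext this
  have h := (basisMonomials (Fin 2 × Fin 2) ℤ).linearIndependent.comp g hg
  have h2 : (fun i : Fin (n + 1) => (Xv 1 0 ^ (i : ℕ) * Xv 1 1 ^ (n - (i : ℕ)) : A)) =
      (basisMonomials (Fin 2 × Fin 2) ℤ) ∘ g := by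
    funext i
    simp [g, Xv, X_pow_eq_monomial, monomial_mul]
  rw [h2]
  convert h

/-- If `p ≤ q` then the ℤ-module `M = { f ∈ R : β(f) = t₁^p t₂^q f }` is free of rank
`q - p + 1`, with basis the elements `D^p · x₂₁^i · x₂₂^{q-p-i}` for `0 ≤ i ≤ q-p`
(the module `A_λ(B\GL₂)` realizes the highest weight module `M_{λ⁻,ℤ}` for `l ≤ 0`). -/
theorem stmt_9 (β : R →+* S)
    (hβ : ∀ a : A, β (algebraMap A R a) = aeval substVal a)
    (u1 u2 : Sˣ) (hu1 : (u1 : S) = t1) (hu2 : (u2 : S) = t2)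
    (uD : Rˣ) (huD : (uD : R) = algebraMap A R Dpoly)
    (p q : ℤ) (hpq : p ≤ q)
    (e : Fin ((q - p).toNat + 1) → R)
    (he : ∀ i, e i = ((uD ^ p : Rˣ) : R) *
      algebraMap A R (Xv 1 0 ^ (i : ℕ) * Xv 1 1 ^ ((q - p).toNat - (i : ℕ)))) :
    (∀ i, β (e i) = ((u1 ^ p * u2 ^ q : Sˣ) : S) * algebraMap R S (e i)) ∧
    LinearIndependent ℤ e ∧
    (∀ f : R, β f = ((u1 ^ p * u2 ^ q : Sˣ) : S) * algebraMap R S f →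
      f ∈ Submodule.span ℤ (Set.range e)) := by
  generalize hn : (q - p).toNat = n at e he
  have hnq : (n : ℤ) = q - p := by omega
  have hq : q = p + n := by omega
  -- behaviour of D
  let α : Rˣ →* Sˣ := Units.map (algebraMap R S : R →* S)
  let b : Rˣ →* Sˣ := Units.map (β : R →* S)
  have hbD : b uD = u1 * u2 * α uD := by
    ext
    simp only [b, α, Units.coe_map, Units.val_mul, hu1, hu2, huD, MonoidHom.coe_coe]
    rw [hβ]
    simp [Dpoly, Xv, substVal, xS]
    ring
  have hbDp : ∀ r : ℤ, β ((uD ^ r : Rˣ) : R) =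
      ((u1 ^ r * u2 ^ r : Sˣ) : S) * algebraMap R S ((uD ^ r : Rˣ) : R) := by
    intro r
    have : b (uD ^ r) = u1 ^ r * u2 ^ r * α (uD ^ r) := by
      rw [map_zpow, map_zpow, hbD, mul_zpow, mul_zpow]
    exact congrArg Units.val this
  have huq : ((u1 ^ p * u2 ^ q : Sˣ) : S) = ((u1 ^ p * u2 ^ p : Sˣ) : S) * t2 ^ n := by
    rw [← hu2, ← Units.val_pow_eq_pow_val, ← Units.val_mul, hq, zpow_add, zpow_natCast, mul_assoc]
  let L : A →ₗ[ℤ] R := (LinearMap.mulLeft ℤ ((uD ^ p : Rˣ) : R)).comp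
    ((algebraMap A R).toAddMonoidHom.toIntLinearMap)
  have hL : ∀ x, L x = ((uD ^ p : Rˣ) : R) * algebraMap A R x := fun x => rfl
  have hLinj : Function.Injective L := by
    intro x y hxy
    rw [hL, hL] at hxy
    exact injAR ((Units.mul_right_inj _).1 hxy)
  have heL : e = L ∘ (fun i : Fin (n + 1) =>
        (Xv 1 0 ^ (i : ℕ) * Xv 1 1 ^ (n - (i : ℕ)) : A)) := by
    funext i; rw [he i]; rfl
  refine ⟨?_, ?_, ?_⟩
  · intro i
    have hi : (i : ℕ) + (n - i) = n := by omega
    rw [he i, map_mul, map_mul (algebraMap R S), hbDp, huq, hβ]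
    have : aeval substVal (Xv 1 0 ^ (i : ℕ) * Xv 1 1 ^ (n - (i : ℕ))) =
        t2 ^ n * algebraMap R S (algebraMap A R (Xv 1 0 ^ (i : ℕ) * Xv 1 1 ^ (n - (i : ℕ)))) := by
      have ht : t2 ^ n = t2 ^ (i : ℕ) * t2 ^ (n - (i : ℕ)) := by rw [← pow_add, hi]
      rw [ht]
      simp [Xv, substVal, xS, mul_pow]
      ring
    rw [this]; ring
  · rw [heL]
    exact (linind n).map' L (LinearMap.ker_eq_bot.2 hLinj)
  · intro f hf
    obtain ⟨g, hg⟩ : ∃ g : R, f = ((uD ^ p : Rˣ) : R) * g :=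
      ⟨((uD ^ p)⁻¹ : Rˣ) * f, by rw [Units.mul_inv_cancel_left]⟩
    have hgβ : β g = t2 ^ n * algebraMap R S g := by
      rw [hg, map_mul, map_mul, hbDp, huq] at hf
      have hu : IsUnit (((u1 ^ p * u2 ^ p : Sˣ) : S) * algebraMap R S ((uD ^ p : Rˣ) : R)) :=
        (Units.isUnit _).mul ((Units.isUnit _).map _)
      apply hu.mul_left_cancel
      rw [hf]; ring
    obtain ⟨⟨a, ⟨_, k, rfl⟩⟩, hk⟩ := IsLocalization.surj (Submonoid.powers Dpoly) g
    simp only [map_pow] at hk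
    have hka : aeval substVal a = t1 ^ k * t2 ^ (n + k) * algebraMap R S (algebraMap A R a) := by
      have hb1 := hbDp 1
      simp only [zpow_one, Units.val_mul, hu1, hu2, huD] at hb1
      rw [← hβ, ← hk, map_mul, map_mul, map_pow, map_pow, hgβ, hb1]
      ring
    obtain ⟨h, hah, hspan⟩ := key2 a k n (fun s t u y => key1 a k (n + k) hka s t u y)
    have hgh : g = algebraMap A R h := by
      have hDk : IsUnit (algebraMap A R Dpoly ^ k) := by
        rw [← huD]; exact (Units.isUnit uD).pow k
      apply hDk.mul_right_cancel
      rw [hk, hah, map_mul, map_pow, mul_comm]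
    have hfL : f = L h := by rw [hL, hg, hgh]
    rw [hfL, heL, Set.range_comp, ← Submodule.map_span]
    exact Submodule.mem_map_of_mem hspan
end
end
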